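/- Assume α = 1, α' = 2, 2β ≤ β', 2γ ≤ γ', Q = (x, y^β, z^γ)R, and that R has characteristic 2. Then (I³ :_R Q³)/(I³ :_R Q²) ≅ R/Q, depth R/(I³ :_R Q³) > 0, hence I^{(3)} = I³ :_R Q³ and length_R(I^{(3)}/I³) = 7 · length_R(R/Q). -/

import Mathlib

open IsLocalRing

/-- The `n`-th symbolic power `I⁽ⁿ⁾ = ⋂_{p ∈ Min(R/I)} (IⁿR_p ∩ R)`. -/
noncomputable def symbolicPower {R : Type*} [CommRing R] (I : Ideal R) (n : ℕ) : Ideal R :=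
  ⨅ p : I.minimalPrimes,
    haveI : Ideal.IsPrime (p : Ideal R) := p.2.1.1
    Ideal.comap (algebraMap R (Localization.AtPrime (p : Ideal R)))
      (Ideal.map (algebraMap R (Localization.AtPrime (p : Ideal R))) (I ^ n))

/-- `M` has (finite) length `n` over `R`: there is a composition series from
`⊥` to `⊤` of length `n`. -/
def HasLength (R M : Type*) [CommRing R] [AddCommGroup M] [Module R M] (n : ℕ) : Prop :=
  ∃ s : CompositionSeries (Submodule R M), s.head = ⊥ ∧ s.last = ⊤ ∧ s.length = n

/-!
Write `u = x`, `v = y^β`, `w = z^γ`, `p = y^(β' - 2β)`, `q = z^(γ' - 2γ)`, so that `I` is the ideal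
of minors of `((u, v, w), (v²p, w²q, u²))` and `Q = (u, v, w)`. In characteristic `2` the element
`qb³ + pac²` of `I³` is divisible by `u²`. The quotient `d` is multiplied into `I³` by
`K = (u², v², w², uvw)`, which contains `Q³`. Conversely `rd ∈ I³` forces `r ∈ K`: modulo any one of
`u`, `v`, `w` the ideal `I` becomes monomial, and the resulting conditions `r ∈ (u, v², w²)`,
`r ∈ (u², v, w²)`, `r ∈ (u², v², w)` together say that `r ∈ K`. Hence `J = I³ + (d)` satisfies
`J/I³ ≅ R/K`, whose length is `8 - 1 = 7` times that of `R/Q`, and `K : uv = Q` gives the quotient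
of `J` by `I³ : Q²`.

Moreover `u` is regular on `R/J`, so that `J = I³ : Q³ = I⁽³⁾`. Indeed modulo `u` the ten generators
of `I³` are monomials forming a staircase, and every relation between neighbours lifts to a relation
modulo `uJ`.
-/

section Ideals

variable {R : Type*} [CommRing R] {I L N Q : Ideal R} {x y d : R}

theorem monomial_mem_span_triple_pow (a b c : R) {i j k n : ℕ} (h : i + j + k = n) :
    a ^ i * b ^ j * c ^ k ∈ Ideal.span {a, b, c} ^ n := by
  rw [← h, pow_add, pow_add]
  exact Ideal.mul_mem_mul (Ideal.mul_mem_mul (Ideal.pow_mem_pow (Ideal.subset_span (by simp)) i)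
    (Ideal.pow_mem_pow (Ideal.subset_span (by simp)) j))
    (Ideal.pow_mem_pow (Ideal.subset_span (by simp)) k)

theorem span_triple_pow_le {a b c : R} {n : ℕ}
    (h : ∀ i j k, i + j + k = n → a ^ i * b ^ j * c ^ k ∈ N) :
    Ideal.span {a, b, c} ^ n ≤ N := by
  induction n generalizing N with
  | zero => simpa [Ideal.eq_top_iff_one] using h 0 0 0 rfl
  | succ n ih =>
    suffices Ideal.span {a, b, c} ≤ Submodule.colon N (Ideal.span {a, b, c} ^ n : Ideal R) by
      rw [pow_succ', Ideal.mul_le]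
      exact fun g hg => Submodule.mem_colon.1 (this hg)
    refine Ideal.span_le.2 fun g hg => Submodule.mem_colon.2 fun s hs => ?_
    suffices Ideal.span {a, b, c} ^ n ≤ Submodule.colon N {g} by
      rw [smul_eq_mul, mul_comm]
      exact Submodule.mem_colon_singleton.1 (this hs)
    refine ih fun i j k hijk => Submodule.mem_colon_singleton.2 ?_
    rcases hg with rfl | rfl | rfl
    · convert h (i + 1) j k (by omega) using 1
      rw [smul_eq_mul]; ring
    · convert h i (j + 1) k (by omega) using 1
      rw [smul_eq_mul]; ring
    · convert h i j (k + 1) (by omega) using 1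
      rw [smul_eq_mul]; ring

theorem mul_mem_iff_of_isSMulRegular_quotient (h : IsSMulRegular (R ⧸ L) x) {r : R} :
    x * r ∈ L ↔ r ∈ L :=
  ⟨(isSMulRegular_quotient_iff_mem_of_smul_mem _ _).1 h r, L.mul_mem_left x⟩

theorem mul_mem_span_mul_sup_iff (h : IsSMulRegular (R ⧸ L) x) {r : R} :
    x * r ∈ Ideal.span {x * y} ⊔ L ↔ r ∈ Ideal.span {y} ⊔ L := by
  simp only [Ideal.mem_span_singleton_sup]
  constructor
  · rintro ⟨s, l, hl, hs⟩
    refine ⟨s, r - s * y, (mul_mem_iff_of_isSMulRegular_quotient h).1 ?_, by ring⟩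
    rwa [show x * (r - s * y) = l by linear_combination -hs]
  · rintro ⟨s, l, hl, rfl⟩
    exact ⟨s, x * l, L.mul_mem_left x hl, by ring⟩

theorem nonempty_sup_span_quotient_equiv (hI : I ≤ N) (hQ : ∀ r, r * d ∈ N ↔ r ∈ Q) :
    Nonempty ((↥(I ⊔ Ideal.span {d}) ⧸ Submodule.comap (I ⊔ Ideal.span {d}).subtype N)
      ≃ₗ[R] (R ⧸ Q)) := by
  let J := I ⊔ Ideal.span {d}
  have hd : d ∈ J := Ideal.mem_sup_right (Ideal.mem_span_singleton_self d)
  let φ : R →ₗ[R] ↥J ⧸ Submodule.comap J.subtype N :=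
    (Submodule.mkQ _).comp (LinearMap.toSpanSingleton R J ⟨d, hd⟩)
  have ker_eq : LinearMap.ker φ = Q := by
    ext r
    rw [LinearMap.mem_ker, ← hQ r]
    exact Submodule.Quotient.mk_eq_zero _
  have surjective : Function.Surjective φ := by
    intro t
    obtain ⟨⟨t, ht⟩, rfl⟩ := Submodule.Quotient.mk_surjective _ t
    obtain ⟨i, hi, _, hr, rfl⟩ := Submodule.mem_sup.1 ht
    obtain ⟨r, rfl⟩ := Ideal.mem_span_singleton'.1 hr
    refine ⟨r, (Submodule.Quotient.eq _).2 ?_⟩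
    change r * d - (i + r * d) ∈ N
    rw [sub_add_cancel_right]
    exact neg_mem (hI hi)
  exact ⟨((Submodule.quotEquivOfEq _ _ ker_eq).symm.trans
    (φ.quotKerEquivOfSurjective surjective)).symm⟩

theorem length_quotient_eq_add_length_quotient_sup_span (K : Ideal R) (g : R) :
    Module.length R (R ⧸ K) = Module.length R (R ⧸ Submodule.colon K {g}) +
      Module.length R (R ⧸ (K ⊔ Ideal.span {g})) := by
  obtain ⟨e⟩ := nonempty_sup_span_quotient_equiv (d := g) (Q := Submodule.colon K {g}) le_rfl
    fun _ => Submodule.mem_colon_singleton.symm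
  rw [← e.length_eq]
  let J := K ⊔ Ideal.span {g}
  have hKJ : K ≤ J := le_sup_left
  refine Module.length_eq_add_of_exact
    (Submodule.mapQ (Submodule.comap J.subtype K) K J.subtype le_rfl)
    (Submodule.factor hKJ) ?_ (Submodule.factor_surjective hKJ) ?_
  · rw [← LinearMap.ker_eq_bot, Submodule.ker_mapQ, Submodule.mkQ_map_self]
  · rw [LinearMap.exact_iff, Submodule.range_mapQ, Submodule.range_subtype]
    exact Submodule.ker_mapQ ..

theorem length_quotient_span_mul_sup (h : IsSMulRegular (R ⧸ L) x) (y : R) :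
    Module.length R (R ⧸ (Ideal.span {x * y} ⊔ L)) =
      Module.length R (R ⧸ (Ideal.span {x} ⊔ L)) +
        Module.length R (R ⧸ (Ideal.span {y} ⊔ L)) := by
  have colon_eq : Submodule.colon (Ideal.span {x * y} ⊔ L) {x} = Ideal.span {y} ⊔ L := by
    ext r
    rw [Submodule.mem_colon_singleton, smul_eq_mul, mul_comm r x, mul_mem_span_mul_sup_iff h]
  have sup_eq : Ideal.span {x * y} ⊔ L ⊔ Ideal.span {x} = Ideal.span {x} ⊔ L := by
    rw [sup_right_comm, sup_eq_right.2 (Ideal.span_singleton_le_span_singleton.2 ⟨y, rfl⟩)]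
  rw [length_quotient_eq_add_length_quotient_sup_span _ x, colon_eq, sup_eq, add_comm]

end Ideals

section Length

variable {R : Type*} [CommRing R]

theorem HasLength.of_length_eq {M : Type*} [AddCommGroup M] [Module R M] {n : ℕ}
    (h : Module.length R M = n) : HasLength R M n := by
  have : IsFiniteLength R M := Module.length_ne_top_iff.1 (by simp [h])
  obtain ⟨s, hs₁, hs₂⟩ := isFiniteLength_iff_exists_compositionSeries.1 this
  refine ⟨s, hs₁, hs₂, ?_⟩
  rw [← Module.length_compositionSeries s hs₁ hs₂] at h
  exact_mod_cast h

theorem length_quotient_ne_top_of_radical_eq [IsNoetherianRing R] [IsLocalRing R] {Q : Ideal R}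
    (h : Q.radical = maximalIdeal R) : Module.length R (R ⧸ Q) ≠ ⊤ := by
  have : maximalIdeal R ∈ Q.minimalPrimes := by
    rw [← Ideal.radical_minimalPrimes, h, Ideal.minimalPrimes_eq_subsingleton_self]
    rfl
  have : IsArtinianRing (R ⧸ Q) :=
    IsLocalRing.quotient_artinian_of_mem_minimalPrimes_of_isLocalRing Q this
  have : IsArtinian R (R ⧸ Q) :=
    isArtinian_of_surjective_algebraMap (Ideal.Quotient.mk_surjective (I := Q))
  exact Module.length_ne_top

end Length

section SymbolicPower

variable {R : Type*} [CommRing R] {I J T P : Ideal R} {x : R} {n : ℕ}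

theorem mem_minimalPrimes_of_radical_sup_span_eq [IsNoetherianRing R] [IsLocalRing R]
    (hI : (I ⊔ Ideal.span {x}).radical = maximalIdeal R) [P.IsPrime] (hIP : I ≤ P) (hx : x ∉ P) :
    P ∈ I.minimalPrimes := by
  have m_mem : maximalIdeal R ∈ (I ⊔ Ideal.span {x}).minimalPrimes := by
    rw [← Ideal.radical_minimalPrimes, hI, Ideal.minimalPrimes_eq_subsingleton_self]
    rfl
  have hIm : I ≤ maximalIdeal R := le_sup_left.trans m_mem.1.2
  have hxm : x ∈ maximalIdeal R :=
    m_mem.1.2 (Ideal.mem_sup_right (Ideal.mem_span_singleton_self x))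
  have hPm : P < maximalIdeal R :=
    (le_maximalIdeal (Ideal.IsPrime.ne_top ‹_›)).lt_of_not_ge fun h => hx (h hxm)
  let π := Ideal.Quotient.mk I
  have isPrime_map {A : Ideal R} [A.IsPrime] (hA : I ≤ A) : (A.map π).IsPrime :=
    Ideal.map_isPrime_of_surjective Ideal.Quotient.mk_surjective (by rwa [Ideal.mk_ker])
  have := isPrime_map hIm
  have := isPrime_map hIP
  have map_lt : P.map π < (maximalIdeal R).map π := by
    refine (Ideal.map_mono hPm.le).lt_of_not_ge fun h => hPm.not_ge ?_
    rw [← Ideal.comap_map_mk hIm, ← Ideal.comap_map_mk hIP]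
    exact Ideal.comap_mono h
  have height_eq_zero : (P.map π).height = 0 := Order.lt_one_iff.1
    (Ideal.height_le_iff.1 (Ideal.map_height_le_one_of_mem_minimalPrimes m_mem) _ ‹_› map_lt)
  rw [Ideal.minimalPrimes_eq_comap]
  exact ⟨P.map π, Ideal.height_eq_zero_iff.1 height_eq_zero, Ideal.comap_map_mk hIP⟩

theorem mem_symbolicPower_iff {h : R} :
    h ∈ symbolicPower I n ↔ ∀ p ∈ I.minimalPrimes, ∃ s ∉ p, s * h ∈ I ^ n := by
  simp only [symbolicPower, Submodule.mem_iInf, Subtype.forall, Ideal.mem_comap]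
  refine forall₂_congr fun p hp => ?_
  have := hp.1.1
  rw [IsLocalization.algebraMap_mem_map_algebraMap_iff p.primeCompl]
  rfl

theorem symbolicPower_le_of_isSMulRegular [IsNoetherianRing R] [IsLocalRing R]
    (hI : (I ⊔ Ideal.span {x}).radical = maximalIdeal R) (hIJ : I ^ n ≤ J)
    (hx : IsSMulRegular (R ⧸ J) x) : symbolicPower I n ≤ J := by
  intro h hh
  by_contra hJ
  obtain ⟨P, hP, hle⟩ := exists_le_isAssociatedPrime_of_isNoetherianRing R
    (Ideal.Quotient.mk J h) (by rwa [ne_eq, Ideal.Quotient.eq_zero_iff_mem])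
  have hle' : Submodule.colon J {h} ≤ P := by
    refine le_trans (fun s hs => ?_) hle
    rw [Submodule.mem_colon_singleton] at hs ⊢
    exact Ideal.Quotient.eq_zero_iff_mem.2 hs
  have hxP : x ∉ P := by
    intro hxP
    have := biUnion_associatedPrimes_eq_compl_regular R (R ⧸ J)
    exact (this.subset (Set.mem_biUnion hP hxP)) hx
  have : P.IsPrime := hP.isPrime
  have hIP : I ≤ P := Ideal.IsPrime.le_of_pow_le (n := n) fun s hs =>
    hle' (Submodule.mem_colon_singleton.2 (J.mul_mem_right h (hIJ hs)))
  obtain ⟨s, hs, hsh⟩ := mem_symbolicPower_iff.1 hh P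
    (mem_minimalPrimes_of_radical_sup_span_eq hI hIP hxP)
  exact hs (hle' (Submodule.mem_colon_singleton.2 (hIJ hsh)))

theorem le_symbolicPower_of_isSMulRegular [IsLocalRing R] (hIJ : I ^ n ≤ J) (hJ : J ≠ ⊤)
    (hxm : x ∈ maximalIdeal R) (hx : IsSMulRegular (R ⧸ J) x)
    (hT : T.radical = maximalIdeal R) (hTJ : T * J ≤ I ^ n) : J ≤ symbolicPower I n := by
  intro h hh
  refine mem_symbolicPower_iff.2 fun p hp => ?_
  have hp_prime : p.IsPrime := hp.1.1
  have hpm : p ≠ maximalIdeal R := by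
    rintro rfl
    obtain ⟨k, hk⟩ : x ∈ I.radical := by
      rw [Ideal.radical_eq_sInf, Submodule.mem_sInf]
      exact fun P ⟨hIP, hP⟩ => hp.2 ⟨hP, hIP⟩ (le_maximalIdeal hP.ne_top) hxm
    have hxJ : x ^ (k * n) * 1 ∈ J := by
      rw [mul_one, pow_mul]
      exact hIJ (Ideal.pow_mem_pow hk n)
    exact hJ ((Ideal.eq_top_iff_one J).2
      ((mul_mem_iff_of_isSMulRegular_quotient (hx.pow (k * n))).1 hxJ))
  obtain ⟨t, htT, htp⟩ := SetLike.not_le_iff_exists.1 fun hTp : T ≤ p =>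
    hpm ((le_maximalIdeal hp_prime.ne_top).antisymm (hT ▸ hp_prime.radical_le_iff.2 hTp))
  exact ⟨t, htp, hTJ (Ideal.mul_mem_mul htT hh)⟩

theorem symbolicPower_eq_of_isSMulRegular [IsNoetherianRing R] [IsLocalRing R]
    (hI : (I ⊔ Ideal.span {x}).radical = maximalIdeal R) (hIJ : I ^ n ≤ J) (hJ : J ≠ ⊤)
    (hx : IsSMulRegular (R ⧸ J) x) (hT : T.radical = maximalIdeal R) (hTJ : T * J ≤ I ^ n) :
    symbolicPower I n = J := by
  have hxm : x ∈ maximalIdeal R :=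
    hI.le (Ideal.le_radical (Ideal.mem_sup_right (Ideal.mem_span_singleton_self x)))
  exact (symbolicPower_le_of_isSMulRegular hI hIJ hx).antisymm
    (le_symbolicPower_of_isSMulRegular hIJ hJ hxm hx hT hTJ)

end SymbolicPower

theorem radical_span_triple_pow {R : Type*} [CommRing R] (x y z : R) {i j k : ℕ}
    (hi : i ≠ 0) (hj : j ≠ 0) (hk : k ≠ 0) :
    (Ideal.span {x ^ i, y ^ j, z ^ k}).radical = (Ideal.span {x, y, z}).radical := by
  have radical_eq (a b c : R) : (Ideal.span {a, b, c}).radical = ((Ideal.span {a}).radical ⊔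
      ((Ideal.span {b}).radical ⊔ (Ideal.span {c}).radical).radical).radical := by
    rw [Ideal.span_insert, Ideal.span_insert, Ideal.radical_sup, Ideal.radical_sup (.span {b})]
  simp only [radical_eq, ← Ideal.span_singleton_pow, Ideal.radical_pow _ hi,
    Ideal.radical_pow _ hj, Ideal.radical_pow _ hk]

section PermutablyRegular

variable {R : Type*} [CommRing R]

theorem isWeaklyRegular_of_forall₂_eq_or_eq_one {M : Type*} [AddCommGroup M] [Module R M]
    {l l' : List R} (hl : List.Forall₂ (fun r s => r = s ∨ r = 1) l l')
    (h : RingTheory.Sequence.IsWeaklyRegular M l') : RingTheory.Sequence.IsWeaklyRegular M l := by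
  induction hl generalizing M with
  | nil => exact h
  | @cons r s l l' hrs _ ih =>
    rw [RingTheory.Sequence.isWeaklyRegular_cons_iff] at h ⊢
    rcases hrs with rfl | rfl
    · exact ⟨h.1, ih h.2⟩
    · refine ⟨IsSMulRegular.one M, ?_⟩
      have : Subsingleton (QuotSMulTop (1 : R) M) := by
        rw [Submodule.Quotient.subsingleton_iff, one_smul]
      exact ⟨fun _ _ _ _ _ => Subsingleton.elim _ _⟩

/-- For all `x ∈ X`, `y ∈ Y`, `z ∈ Z`, the elements `x, y, z` form a weakly regular sequence in
every order. -/
def PermutablyRegular (X Y Z : Submonoid R) : Prop :=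
  ∀ x ∈ X, ∀ y ∈ Y, ∀ z ∈ Z, ∀ l : List R, l.Perm [x, y, z] →
    RingTheory.Sequence.IsWeaklyRegular R l

theorem permutablyRegular_powers_of_radical_eq [IsLocalRing R]
    (hCM : ∀ u v w : R, (Ideal.span {u, v, w}).radical = maximalIdeal R →
      RingTheory.Sequence.IsRegular R [u, v, w])
    {x y z : R} (hsop : (Ideal.span {x, y, z}).radical = maximalIdeal R) :
    PermutablyRegular (Submonoid.powers x) (Submonoid.powers y) (Submonoid.powers z) := by
  rintro _ ⟨i, rfl⟩ _ ⟨j, rfl⟩ _ ⟨k, rfl⟩ l hl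
  have pow_eq (r : R) (n : ℕ) : r ^ n = r ^ max n 1 ∨ r ^ n = 1 := by
    rcases n.eq_zero_or_pos with rfl | hn
    · exact Or.inr (pow_zero r)
    · exact Or.inl (by rw [max_eq_left hn])
  obtain ⟨l', hll', hl'⟩ := List.perm_comp_forall₂ (r := fun r s => r = s ∨ r = 1) hl
    (.cons (pow_eq x i) (.cons (pow_eq y j) (.cons (pow_eq z k) .nil)))
  refine isWeaklyRegular_of_forall₂_eq_or_eq_one hll' ?_
  obtain ⟨u, v, w, rfl⟩ := List.length_eq_three.1 hl'.length_eq
  refine (hCM u v w ?_).toIsWeaklyRegular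
  have span_eq : Ideal.span {u, v, w} = Ideal.span {x ^ max i 1, y ^ max j 1, z ^ max k 1} := by
    congr 1
    ext r
    simpa using hl'.mem_iff (a := r)
  rw [span_eq, radical_span_triple_pow _ _ _ (by omega) (by omega) (by omega), hsop]

namespace PermutablyRegular

variable {X Y Z : Submonoid R} {x y z : R}

theorem mono (h : PermutablyRegular X Y Z) {X' Y' Z' : Submonoid R} (hX : X' ≤ X) (hY : Y' ≤ Y)
    (hZ : Z' ≤ Z) : PermutablyRegular X' Y' Z' :=
  fun x hx y hy z hz => h x (hX hx) y (hY hy) z (hZ hz)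

theorem rotate (h : PermutablyRegular X Y Z) : PermutablyRegular Y Z X :=
  fun y hy z hz x hx l hl =>
    h x hx y hy z hz l (hl.trans (List.perm_append_comm (l₁ := [y, z]) (l₂ := [x])))

theorem isSMulRegular (h : PermutablyRegular X Y Z) (hx : x ∈ X) : IsSMulRegular R x := by
  have := h x hx 1 Y.one_mem 1 Z.one_mem _ (.refl _)
  rw [RingTheory.Sequence.isWeaklyRegular_cons_iff] at this
  exact this.1

theorem isSMulRegular_quotient_span_singleton (h : PermutablyRegular X Y Z) (hx : x ∈ X)
    (hy : y ∈ Y) : IsSMulRegular (R ⧸ Ideal.span {x}) y := by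
  have := (h x hx y hy 1 Z.one_mem _ (.refl _)).regular_mod_prev 1 (by simp)
  rw [isSMulRegular_quotient_iff_mem_of_smul_mem] at this ⊢
  simpa using this

theorem isSMulRegular_quotient_span_pair (h : PermutablyRegular X Y Z) (hx : x ∈ X)
    (hy : y ∈ Y) (hz : z ∈ Z) : IsSMulRegular (R ⧸ Ideal.span {x, y}) z := by
  have := (h x hx y hy z hz _ (.refl _)).regular_mod_prev 2 (by simp)
  rw [isSMulRegular_quotient_iff_mem_of_smul_mem] at this ⊢
  simpa [← Ideal.span_insert] using this

theorem mul_mem_span_triple_iff (h : PermutablyRegular X Y Z) (hx : x ∈ X) (hy : y ∈ Y)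
    (hz : z ∈ Z) (z' : R) {r : R} :
    z * r ∈ Ideal.span {z * z', x, y} ↔ r ∈ Ideal.span {z', x, y} := by
  rw [Ideal.span_insert, Ideal.span_insert z',
    mul_mem_span_mul_sup_iff (h.isSMulRegular_quotient_span_pair hx hy hz)]

end PermutablyRegular

end PermutablyRegular

section SquaresAndProd

variable {R : Type*} [CommRing R] {u v w r : R}

/-- The ideal `(u², v², w², uvw)`. For the ideal `I` of minors of `((u, v, w), (v²p, w²q, u²))` it
is the annihilator of the additional generator of `I³ : Q³` modulo `I³`. -/
def squaresAndProd (u v w : R) : Ideal R :=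
  Ideal.span {u ^ 2, v ^ 2, w ^ 2} ⊔ Ideal.span {u * v * w}

theorem span_triple_rotate (a b c : R) : Ideal.span {a, b, c} = Ideal.span {b, c, a} := by
  rw [Set.insert_comm, Set.pair_comm a c]

theorem mem_squaresAndProd_iff_exists :
    r ∈ squaresAndProd u v w ↔
      ∃ f g h k, f * u ^ 2 + g * v ^ 2 + h * w ^ 2 + k * (u * v * w) = r := by
  simp only [squaresAndProd, sup_comm, Ideal.mem_span_singleton_sup, Submodule.mem_span_triple,
    smul_eq_mul]
  constructor
  · rintro ⟨k, _, ⟨f, g, h, rfl⟩, rfl⟩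
    exact ⟨f, g, h, k, by ring⟩
  · rintro ⟨f, g, h, k, rfl⟩
    exact ⟨k, _, ⟨f, g, h, rfl⟩, by ring⟩

theorem span_triple_cube_le_squaresAndProd (u v w : R) :
    Ideal.span {u, v, w} ^ 3 ≤ squaresAndProd u v w := by
  refine span_triple_pow_le fun i j k hijk => mem_squaresAndProd_iff_exists.2 ?_
  by_cases hi : 2 ≤ i
  · obtain ⟨i, rfl⟩ := Nat.exists_eq_add_of_le' hi
    exact ⟨u ^ i * v ^ j * w ^ k, 0, 0, 0, by ring⟩
  by_cases hj : 2 ≤ j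
  · obtain ⟨j, rfl⟩ := Nat.exists_eq_add_of_le' hj
    exact ⟨0, u ^ i * v ^ j * w ^ k, 0, 0, by ring⟩
  by_cases hk : 2 ≤ k
  · obtain ⟨k, rfl⟩ := Nat.exists_eq_add_of_le' hk
    exact ⟨0, 0, u ^ i * v ^ j * w ^ k, 0, by ring⟩
  obtain ⟨rfl, rfl, rfl⟩ : i = 1 ∧ j = 1 ∧ k = 1 := by omega
  exact ⟨0, 0, 0, 1, by ring⟩

theorem squaresAndProd_le_span_sq_sq (u v w : R) :
    squaresAndProd u v w ≤ Ideal.span {u ^ 2, v ^ 2, w} := by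
  intro r hr
  obtain ⟨f, g, h, k, rfl⟩ := mem_squaresAndProd_iff_exists.1 hr
  exact Submodule.mem_span_triple.2 ⟨f, g, h * w + k * u * v, by simp only [smul_eq_mul]; ring⟩

namespace PermutablyRegular

variable {X Y Z : Submonoid R}

theorem mul_mul_mem_span_sq_sq_iff (h : PermutablyRegular X Y Z) (hu : u ∈ X) (hv : v ∈ Y)
    (hw : w ∈ Z) : u * (v * r) ∈ Ideal.span {u ^ 2, v ^ 2, w} ↔ r ∈ Ideal.span {u, v, w} := by
  rw [pow_two u, h.rotate.mul_mem_span_triple_iff (pow_mem hv 2) hw hu, span_triple_rotate,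
    pow_two v, h.rotate.rotate.mul_mem_span_triple_iff hw hu hv, ← span_triple_rotate]

theorem mul_mul_mul_mem_span_sq_iff (h : PermutablyRegular X Y Z) (hu : u ∈ X) (hv : v ∈ Y)
    (hw : w ∈ Z) :
    u * (v * (w * r)) ∈ Ideal.span {u ^ 2, v ^ 2, w ^ 2} ↔ r ∈ Ideal.span {u, v, w} := by
  rw [h.mul_mul_mem_span_sq_sq_iff hu hv (pow_mem hw 2), ← span_triple_rotate, pow_two w,
    h.mul_mem_span_triple_iff hu hv hw, span_triple_rotate]

theorem mul_mem_squaresAndProd_iff (h : PermutablyRegular X Y Z) (hu : u ∈ X) (hv : v ∈ Y)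
    (hw : w ∈ Z) : r * (u * v) ∈ squaresAndProd u v w ↔ r ∈ Ideal.span {u, v, w} := by
  constructor
  · intro hr
    rw [← h.mul_mul_mem_span_sq_sq_iff hu hv hw, ← mul_assoc, mul_comm]
    exact squaresAndProd_le_span_sq_sq u v w hr
  · intro hr
    obtain ⟨f, g, k, rfl⟩ := Submodule.mem_span_triple.1 hr
    exact mem_squaresAndProd_iff_exists.2 ⟨f * v, g * u, 0, k, by simp only [smul_eq_mul]; ring⟩

theorem mem_squaresAndProd_of_mem_span (h : PermutablyRegular X Y Z) (hu : u ∈ X) (hv : v ∈ Y)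
    (hw : w ∈ Z) (hr₁ : r ∈ Ideal.span {u, v ^ 2, w ^ 2}) (hr₂ : r ∈ Ideal.span {u ^ 2, v, w ^ 2})
    (hr₃ : r ∈ Ideal.span {u ^ 2, v ^ 2, w}) : r ∈ squaresAndProd u v w := by
  obtain ⟨s, f, g, rfl⟩ := Submodule.mem_span_triple.1 hr₁
  simp only [smul_eq_mul] at hr₁ hr₂ hr₃ ⊢
  have hs : s ∈ Ideal.span {u, v, w ^ 2} := by
    rw [← h.rotate.mul_mem_span_triple_iff hv (pow_mem hw 2) hu, ← pow_two]
    convert sub_mem hr₂ (Submodule.mem_span_triple.2 ⟨0, f * v, g, rfl⟩) using 1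
    simp only [smul_eq_mul]; ring
  obtain ⟨f', t, g', rfl⟩ := Submodule.mem_span_triple.1 hs
  simp only [smul_eq_mul] at hr₃ ⊢
  have ht : t ∈ Ideal.span {u, v, w} := by
    rw [← h.mul_mul_mem_span_sq_sq_iff hu hv hw]
    convert sub_mem hr₃ (Submodule.mem_span_triple.2 ⟨f', f, g * w + g' * w * u, rfl⟩) using 1
    simp only [smul_eq_mul]; ring
  obtain ⟨a, b, c, rfl⟩ := Submodule.mem_span_triple.1 ht
  exact mem_squaresAndProd_iff_exists.2
    ⟨f' + a * v, f + b * u, g + g' * u, c, by simp only [smul_eq_mul]; ring⟩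

theorem length_quotient_span_sq (h : PermutablyRegular X Y Z) (hu : u ∈ X) (hv : v ∈ Y)
    (hw : w ∈ Z) : Module.length R (R ⧸ Ideal.span {u ^ 2, v, w}) =
      2 * Module.length R (R ⧸ Ideal.span {u, v, w}) := by
  rw [Ideal.span_insert, Ideal.span_insert u, pow_two, two_mul,
    length_quotient_span_mul_sup (h.rotate.isSMulRegular_quotient_span_pair hv hw hu)]

theorem length_quotient_span_sq_sq_sq (h : PermutablyRegular X Y Z) (hu : u ∈ X) (hv : v ∈ Y)
    (hw : w ∈ Z) : Module.length R (R ⧸ Ideal.span {u ^ 2, v ^ 2, w ^ 2}) =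
      8 * Module.length R (R ⧸ Ideal.span {u, v, w}) := by
  rw [h.length_quotient_span_sq hu (pow_mem hv 2) (pow_mem hw 2), span_triple_rotate,
    h.rotate.length_quotient_span_sq hv (pow_mem hw 2) hu, span_triple_rotate,
    h.rotate.rotate.length_quotient_span_sq hw hu hv, span_triple_rotate]
  ring

theorem length_quotient_squaresAndProd (h : PermutablyRegular X Y Z) (hu : u ∈ X) (hv : v ∈ Y)
    (hw : w ∈ Z) : Module.length R (R ⧸ squaresAndProd u v w) =
      7 * Module.length R (R ⧸ Ideal.span {u, v, w}) := by
  have colon_eq : Submodule.colon (Ideal.span {u ^ 2, v ^ 2, w ^ 2}) {u * v * w} =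
      Ideal.span {u, v, w} := by
    ext r
    rw [Submodule.mem_colon_singleton, ← h.mul_mul_mul_mem_span_sq_iff hu hv hw]
    ring_nf
  have key := length_quotient_eq_add_length_quotient_sup_span
    (Ideal.span {u ^ 2, v ^ 2, w ^ 2}) (u * v * w)
  rw [colon_eq, h.length_quotient_span_sq_sq_sq hu hv hw, ← squaresAndProd] at key
  have le : squaresAndProd u v w ≤ Ideal.span {u, v, w} := fun r hr => by
    obtain ⟨a, b, c, d, rfl⟩ := mem_squaresAndProd_iff_exists.1 hr
    exact Submodule.mem_span_triple.2
      ⟨a * u + d * v * w, b * v, c * w, by simp only [smul_eq_mul]; ring⟩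
  have length_le := Module.length_le_of_surjective _ (Submodule.factor_surjective le)
  rcases eq_or_ne (Module.length R (R ⧸ Ideal.span {u, v, w})) ⊤ with htop | htop
  · simpa [htop] using length_le
  · rw [show (8 : ℕ∞) = 1 + 7 by norm_num, add_mul, one_mul] at key
    exact ((WithTop.add_left_inj htop).1 key).symm

end PermutablyRegular

end SquaresAndProd

section LiftsModulo

variable {R : Type*} [CommRing R] {J : Ideal R} {s : Set R} {x m n δ g g' t j : R}

/-- The ideal generated by `s` lies in `(x, m)`, and each of its elements divisible by `x` lies in
`xJ`: every relation between the images of `s` modulo `x` lifts to a relation modulo `xJ`. -/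
structure LiftsModulo (x m : R) (J : Ideal R) (s : Set R) : Prop where
  span_le : Ideal.span s ≤ Ideal.span {x, m}
  span_inf_le : Ideal.span s ⊓ Ideal.span {x} ≤ Ideal.span {x} * J

namespace LiftsModulo

theorem singleton (hm : IsSMulRegular (R ⧸ Ideal.span {x}) m) (hgJ : g ∈ J)
    (hg : g ≡ m [SMOD Ideal.span {x}]) : LiftsModulo x m J {g} := by
  have hgm : g - m ∈ Ideal.span {x} := SModEq.sub_mem.1 hg
  obtain ⟨l, hl⟩ := Ideal.mem_span_singleton.1 hgm
  refine ⟨?_, ?_⟩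
  · rw [Ideal.span_singleton_le_iff_mem]
    exact Ideal.mem_span_pair.2 ⟨l, 1, by linear_combination -hl⟩
  · rintro _ ⟨hr, hx⟩
    obtain ⟨r, rfl⟩ := Ideal.mem_span_singleton'.1 hr
    have hmr : m * r ∈ Ideal.span {x} := by
      convert sub_mem hx (Ideal.mul_mem_left _ r hgm) using 1
      ring
    exact Ideal.mul_mem_mul ((mul_mem_iff_of_isSMulRegular_quotient hm).1 hmr) hgJ

/- If `r g + σ` with `σ ∈ (s)` is divisible by `x`, regularity of `m` and `n` forces `r ∈ (x, δ)`,
and `δ g = t g' + x j` then rewrites the sum as an element of `(s)` plus an element of `xJ`. -/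
theorem insert (h : LiftsModulo x (m * δ) J s) (hm : IsSMulRegular (R ⧸ Ideal.span {x}) m)
    (hn : IsSMulRegular (R ⧸ Ideal.span {x, δ}) n) (hgJ : g ∈ J)
    (hg : g ≡ m * n [SMOD Ideal.span {x}]) (hg' : g' ∈ s) (hj : j ∈ J)
    (hrel : δ * g = t * g' + x * j) : LiftsModulo x m J (insert g s) := by
  obtain ⟨l, hl⟩ := Ideal.mem_span_singleton.1 (SModEq.sub_mem.1 hg)
  refine ⟨?_, ?_⟩
  · rw [Ideal.span_insert, sup_le_iff, Ideal.span_singleton_le_iff_mem]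
    refine ⟨Ideal.mem_span_pair.2 ⟨l, n, by linear_combination -hl⟩, h.span_le.trans ?_⟩
    rw [Ideal.span_insert, Ideal.span_insert]
    exact sup_le_sup_left (Ideal.span_singleton_le_span_singleton.2 ⟨δ, rfl⟩) _
  · rintro _ ⟨hr, hx⟩
    rw [Ideal.span_insert] at hr
    obtain ⟨r, σ, hσ, rfl⟩ := Ideal.mem_span_singleton_sup.1 hr
    obtain ⟨y, hy⟩ := Ideal.mem_span_singleton.1 hx
    obtain ⟨e, f, rfl⟩ := Ideal.mem_span_pair.1 (h.span_le hσ)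
    have h₁ : n * r + δ * f ∈ Ideal.span {x} := by
      rw [← mul_mem_iff_of_isSMulRegular_quotient hm]
      exact Ideal.mem_span_singleton.2 ⟨y - r * l - e, by linear_combination hy - r * hl⟩
    obtain ⟨k, hk⟩ := Ideal.mem_span_singleton.1 h₁
    have h₂ : r ∈ Ideal.span {x, δ} := by
      rw [← mul_mem_iff_of_isSMulRegular_quotient hn]
      exact Ideal.mem_span_pair.2 ⟨k, -f, by linear_combination -hk⟩
    obtain ⟨r₁, r₂, rfl⟩ := Ideal.mem_span_pair.1 h₂
    set σ := e * x + f * (m * δ)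
    have hxJ : x * (r₁ * g + r₂ * j) ∈ Ideal.span {x} * J :=
      Ideal.mul_mem_mul (Ideal.mem_span_singleton_self x)
        (add_mem (J.mul_mem_left _ hgJ) (J.mul_mem_left _ hj))
    have hrest : r₂ * t * g' + σ ∈ Ideal.span {x} * J := by
      refine h.span_inf_le ⟨add_mem (Ideal.mul_mem_left _ _ (Ideal.subset_span hg')) hσ, ?_⟩
      refine Ideal.mem_span_singleton.2 ⟨y - (r₁ * g + r₂ * j), ?_⟩
      linear_combination hy - r₂ * hrel
    convert add_mem hxJ hrest using 1
    linear_combination r₂ * hrel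

end LiftsModulo

end LiftsModulo

theorem span_triple_pow_le_of_mem {R : Type*} [CommRing R] {N : Ideal R} {a b c : R} {n : ℕ}
    (ha : a ^ n ∈ N) (hb : b ∈ N) (hc : c ∈ N) : Ideal.span {a, b, c} ^ n ≤ N := by
  refine span_triple_pow_le fun i j k hijk => ?_
  rcases j.eq_zero_or_pos with rfl | hj
  · rcases k.eq_zero_or_pos with rfl | hk
    · rw [add_zero, add_zero] at hijk
      rwa [hijk, pow_zero, pow_zero, mul_one, mul_one]
    · exact N.mul_mem_left _ (N.pow_mem_of_mem hc k hk)
  · exact N.mul_mem_right _ (N.mul_mem_left _ (N.pow_mem_of_mem hb j hj))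

/-- The matrix `((u, v, w), (v²p, w²q, u²))`. The matrix of the theorem has `u = x`, `v = y^β`,
`w = z^γ`, `p = y^(β' - 2β)` and `q = z^(γ' - 2γ)`. -/
structure HerzogMatrix (R : Type*) where
  (u v w p q : R)

namespace HerzogMatrix

variable {R : Type*} [CommRing R] (M : HerzogMatrix R)

/-- Minus the minor of the last two columns. -/
def a : R := M.w ^ 3 * M.q - M.u ^ 2 * M.v

/-- The minor of the outer columns. -/
def b : R := M.u ^ 3 - M.v ^ 2 * M.w * M.p

/-- Minus the minor of the first two columns. -/
def c : R := M.v ^ 3 * M.p - M.u * M.w ^ 2 * M.q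

/-- The ideal `I` of maximal minors. -/
def minorsIdeal : Ideal R := Ideal.span {M.a, M.b, M.c}

/-- The ideal `Q` generated by the first row. -/
def rowIdeal : Ideal R := Ideal.span {M.u, M.v, M.w}

/-- The element with `ue = wqb² + vpac`, obtained by dividing by `u`. -/
def e : R :=
  M.u * M.v ^ 5 * M.p ^ 2 + M.v * M.w ^ 5 * M.p * M.q ^ 2 + M.u ^ 5 * M.w * M.q +
    M.u ^ 2 * M.v ^ 2 * M.w ^ 2 * M.p * M.q

/-- The generator of `I³ : Q³` modulo `I³`. It is obtained by dividing `qb³ + pac²` by `u²`, a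
division which is possible only in characteristic `2`. -/
def d : R :=
  M.v ^ 7 * M.p ^ 3 + M.u * M.v ^ 4 * M.w ^ 2 * M.p ^ 2 * M.q +
    M.u ^ 2 * M.v * M.w ^ 4 * M.p * M.q ^ 2 + M.w ^ 7 * M.p * M.q ^ 3 + M.u ^ 7 * M.q +
    M.u ^ 4 * M.v ^ 2 * M.w * M.p * M.q

/-- The ideal `I³ + (d)`, which turns out to be `I³ : Q³`. -/
def extendedCube : Ideal R := M.minorsIdeal ^ 3 ⊔ Ideal.span {M.d}

/-- A power of `u`, a monomial in `v, p` and a monomial in `w, q` always form a weakly regular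
sequence, in every order. -/
def IsRegular : Prop :=
  PermutablyRegular (Submonoid.closure {M.u}) (Submonoid.closure {M.v, M.p})
    (Submonoid.closure {M.w, M.q})

theorem firstRow_relation : M.u * M.a + M.v * M.b + M.w * M.c = 0 := by
  simp only [a, b, c]; ring

theorem secondRow_relation :
    M.v ^ 2 * M.p * M.a + M.w ^ 2 * M.q * M.b + M.u ^ 2 * M.c = 0 := by
  simp only [a, b, c]; ring

theorem a_mem : M.a ∈ M.minorsIdeal := Ideal.subset_span (by simp)

theorem c_mem : M.c ∈ M.minorsIdeal := Ideal.subset_span (by simp)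

theorem minorsIdeal_cube_le : M.minorsIdeal ^ 3 ≤ M.extendedCube := le_sup_left

theorem d_mem : M.d ∈ M.extendedCube :=
  Ideal.mem_sup_right (Ideal.mem_span_singleton_self M.d)

theorem monomial_mem {i j k : ℕ} (h : i + j + k = 3) :
    M.a ^ i * M.b ^ j * M.c ^ k ∈ M.minorsIdeal ^ 3 :=
  monomial_mem_span_triple_pow _ _ _ h

theorem u_mem_rowIdeal : M.u ∈ M.rowIdeal := Ideal.subset_span (by simp)

theorem v_mem_rowIdeal : M.v ∈ M.rowIdeal := Ideal.subset_span (by simp)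

theorem minorsIdeal_le_rowIdeal : M.minorsIdeal ≤ M.rowIdeal := by
  simp only [minorsIdeal, rowIdeal, Ideal.span_le, Set.insert_subset_iff,
    Set.singleton_subset_iff, SetLike.mem_coe, Submodule.mem_span_triple, smul_eq_mul]
  exact ⟨⟨-M.u * M.v, 0, M.w ^ 2 * M.q, by simp only [a]; ring⟩,
    ⟨M.u ^ 2, -M.v * M.w * M.p, 0, by simp only [b]; ring⟩,
    ⟨-M.w ^ 2 * M.q, M.v ^ 2 * M.p, 0, by simp only [c]; ring⟩⟩

theorem extendedCube_le_rowIdeal : M.extendedCube ≤ M.rowIdeal := by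
  refine sup_le ((Ideal.pow_le_self three_ne_zero).trans M.minorsIdeal_le_rowIdeal) ?_
  rw [Ideal.span_singleton_le_iff_mem, rowIdeal, Submodule.mem_span_triple]
  refine ⟨M.v ^ 4 * M.w ^ 2 * M.p ^ 2 * M.q + M.u * M.v * M.w ^ 4 * M.p * M.q ^ 2 +
    M.u ^ 6 * M.q + M.u ^ 3 * M.v ^ 2 * M.w * M.p * M.q, M.v ^ 6 * M.p ^ 3,
    M.w ^ 6 * M.p * M.q ^ 3, ?_⟩
  simp only [d, smul_eq_mul]; ring

theorem span_le_minorsIdeal_sup_span :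
    Ideal.span {M.u, M.v ^ 3 * M.p, M.w ^ 3 * M.q} ≤ M.minorsIdeal ⊔ Ideal.span {M.u} := by
  simp only [Ideal.span_le, Set.insert_subset_iff, Set.singleton_subset_iff, SetLike.mem_coe,
    sup_comm M.minorsIdeal, Ideal.mem_span_singleton_sup]
  exact ⟨⟨1, 0, zero_mem _, by ring⟩,
    ⟨M.w ^ 2 * M.q, M.c, M.c_mem, by simp only [c]; ring⟩,
    ⟨M.u * M.v, M.a, M.a_mem, by simp only [a]; ring⟩⟩

section CharTwo

variable [CharP R 2]

theorem u_mul_e : M.u * M.e = M.w * M.q * M.b ^ 2 + M.v * M.p * M.a * M.c := by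
  simp only [a, b, c, e]; grind

theorem sq_u_mul_d : M.u ^ 2 * M.d = M.q * M.b ^ 3 + M.p * M.a * M.c ^ 2 := by
  simp only [a, b, c, d]; grind

theorem sq_v_mul_d : M.v ^ 2 * M.d = M.c ^ 3 + M.q * M.a ^ 2 * M.b := by
  simp only [a, b, c, d]; grind

theorem sq_w_mul_d : M.w ^ 2 * M.d = M.p * M.a ^ 3 + M.b ^ 2 * M.c := by
  simp only [a, b, c, d]; grind

theorem v_mul_w_mul_d : M.v * M.w * M.d = M.a * M.e + M.b * M.c ^ 2 := by
  simp only [a, b, c, d, e]; grind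

theorem a_mul_e_mem : M.a * M.e ∈ M.extendedCube := by
  convert sub_mem (M.extendedCube.mul_mem_left (M.v * M.w) M.d_mem)
    (M.minorsIdeal_cube_le (M.monomial_mem (i := 0) (j := 1) (k := 2) rfl)) using 1
  linear_combination -M.v_mul_w_mul_d

theorem mul_d_mem_minorsIdeal_cube {r : R} (hr : r ∈ squaresAndProd M.u M.v M.w) :
    r * M.d ∈ M.minorsIdeal ^ 3 := by
  obtain ⟨f, g, h, k, rfl⟩ := mem_squaresAndProd_iff_exists.1 hr
  have key : (f * M.u ^ 2 + g * M.v ^ 2 + h * M.w ^ 2 + k * (M.u * M.v * M.w)) * M.d =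
      f * M.q * (M.a ^ 0 * M.b ^ 3 * M.c ^ 0) + f * M.p * (M.a ^ 1 * M.b ^ 0 * M.c ^ 2) +
      g * (M.a ^ 0 * M.b ^ 0 * M.c ^ 3) + g * M.q * (M.a ^ 2 * M.b ^ 1 * M.c ^ 0) +
      h * M.p * (M.a ^ 3 * M.b ^ 0 * M.c ^ 0) + h * (M.a ^ 0 * M.b ^ 2 * M.c ^ 1) +
      k * M.w * M.q * (M.a ^ 1 * M.b ^ 2 * M.c ^ 0) +
      k * M.v * M.p * (M.a ^ 2 * M.b ^ 0 * M.c ^ 1) +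
      k * M.u * (M.a ^ 0 * M.b ^ 1 * M.c ^ 2) := by
    linear_combination f * M.sq_u_mul_d + g * M.sq_v_mul_d + h * M.sq_w_mul_d +
      k * M.u * M.v_mul_w_mul_d + k * M.a * M.u_mul_e
  rw [key]
  repeat' apply Ideal.add_mem
  all_goals exact Ideal.mul_mem_left _ _ (M.monomial_mem rfl)

theorem rowIdeal_cube_mul_extendedCube_le :
    M.rowIdeal ^ 3 * M.extendedCube ≤ M.minorsIdeal ^ 3 := by
  rw [extendedCube, Ideal.mul_sup, sup_le_iff, Ideal.mul_le, Ideal.mul_le]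
  refine ⟨fun s _ i hi => Ideal.mul_mem_left _ s hi, fun s hs t ht => ?_⟩
  obtain ⟨f, rfl⟩ := Ideal.mem_span_singleton.1 ht
  rw [← mul_assoc]
  exact Ideal.mul_mem_right _ _
    (M.mul_d_mem_minorsIdeal_cube (span_triple_cube_le_squaresAndProd _ _ _ hs))

end CharTwo

variable {M} {r : R}

theorem u_mem_closure : M.u ∈ Submonoid.closure {M.u} := Submonoid.subset_closure (by simp)

theorem v_mem_closure : M.v ∈ Submonoid.closure {M.v, M.p} := Submonoid.subset_closure (by simp)

theorem w_mem_closure : M.w ∈ Submonoid.closure {M.w, M.q} := Submonoid.subset_closure (by simp)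

theorem p_mem_closure : M.p ∈ Submonoid.closure {M.v, M.p} := Submonoid.subset_closure (by simp)

theorem q_mem_closure : M.q ∈ Submonoid.closure {M.w, M.q} := Submonoid.subset_closure (by simp)

theorem monomial_smodEq [CharP R 2] (i j k : ℕ) :
    M.a ^ i * M.b ^ j * M.c ^ k ≡
      M.v ^ (2 * j + 3 * k) * M.p ^ (j + k) * (M.w ^ (3 * i + j) * M.q ^ i)
      [SMOD Ideal.span {M.u}] := by
  have ha : M.a ≡ M.w ^ 3 * M.q [SMOD Ideal.span {M.u}] :=
    SModEq.sub_mem.2 (Ideal.mem_span_singleton.2 ⟨-M.u * M.v, by simp only [a]; ring⟩)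
  have hb : M.b ≡ M.v ^ 2 * M.w * M.p [SMOD Ideal.span {M.u}] :=
    SModEq.sub_mem.2 (Ideal.mem_span_singleton.2 ⟨M.u ^ 2, by simp only [b]; grind⟩)
  have hc : M.c ≡ M.v ^ 3 * M.p [SMOD Ideal.span {M.u}] :=
    SModEq.sub_mem.2 (Ideal.mem_span_singleton.2 ⟨-M.w ^ 2 * M.q, by simp only [c]; ring⟩)
  convert ((ha.pow i).mul (hb.pow j)).mul (hc.pow k) using 1
  ring

namespace IsRegular

theorem mem_span_u_of_mul_d_mem (h : M.IsRegular)
    (hr : r * M.d ∈ M.minorsIdeal ^ 3 ⊔ Ideal.span {M.u}) :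
    r ∈ Ideal.span {M.u, M.v ^ 2, M.w ^ 2} := by
  obtain ⟨u, v, w, p, q⟩ := M
  let L := Ideal.span {w ^ 7 * q ^ 3 * w ^ 2, u, p * v ^ 2}
  have mem_L (f g k : R) : f * (w ^ 7 * q ^ 3 * w ^ 2) + g * u + k * (p * v ^ 2) ∈ L :=
    Submodule.mem_span_triple.2 ⟨f, g, k, rfl⟩
  have cube_le : minorsIdeal ⟨u, v, w, p, q⟩ ^ 3 ≤ L := by
    refine span_triple_pow_le_of_mem ?_ ?_ ?_
    · convert mem_L 1 (-3 * w ^ 6 * q ^ 2 * u * v + 3 * w ^ 3 * q * u ^ 3 * v ^ 2 - u ^ 5 * v ^ 3) 0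
        using 1
      simp only [a]; ring
    · convert mem_L 0 (u ^ 2) (-w) using 1
      simp only [b]; ring
    · convert mem_L 0 (-w ^ 2 * q) v using 1
      simp only [c]; ring
  have hrL : w ^ 7 * q ^ 3 * (p * r) ∈ L := by
    have := sup_le cube_le (by simpa using mem_L 0 1 0) hr
    convert sub_mem this (mem_L 0 (r * (v ^ 4 * w ^ 2 * p ^ 2 * q + u * v * w ^ 4 * p * q ^ 2 +
      u ^ 6 * q + u ^ 3 * v ^ 2 * w * p * q)) (r * v ^ 5 * p ^ 2)) using 1
    simp only [d]; ring
  rwa [h.mul_mem_span_triple_iff u_mem_closure (mul_mem p_mem_closure (pow_mem v_mem_closure 2))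
      (mul_mem (pow_mem w_mem_closure 7) (pow_mem q_mem_closure 3)), ← span_triple_rotate,
    h.rotate.rotate.mul_mem_span_triple_iff (pow_mem w_mem_closure 2) u_mem_closure p_mem_closure,
    ← span_triple_rotate] at hrL

theorem mem_span_v_of_mul_d_mem (h : M.IsRegular) (hr : r * M.d ∈ M.minorsIdeal ^ 3) :
    r ∈ Ideal.span {M.u ^ 2, M.v, M.w ^ 2} := by
  obtain ⟨u, v, w, p, q⟩ := M
  let L := Ideal.span {u ^ 7 * u ^ 2, v, q * w ^ 2}
  have mem_L (f g k : R) : f * (u ^ 7 * u ^ 2) + g * v + k * (q * w ^ 2) ∈ L :=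
    Submodule.mem_span_triple.2 ⟨f, g, k, rfl⟩
  have cube_le : minorsIdeal ⟨u, v, w, p, q⟩ ^ 3 ≤ L := by
    rw [minorsIdeal, span_triple_rotate]
    refine span_triple_pow_le_of_mem ?_ ?_ ?_
    · convert mem_L 1 (-3 * u ^ 6 * v * w * p + 3 * u ^ 3 * v ^ 3 * w ^ 2 * p ^ 2
        - v ^ 5 * w ^ 3 * p ^ 3) 0 using 1
      simp only [b]; ring
    · convert mem_L 0 (v ^ 2 * p) (-u) using 1
      simp only [c]; ring
    · convert mem_L 0 (-u ^ 2) w using 1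
      simp only [a]; ring
  have hrL : u ^ 7 * (q * r) ∈ L := by
    convert sub_mem (cube_le hr) (mem_L 0 (r * (v ^ 6 * p ^ 3 + u * v ^ 3 * w ^ 2 * p ^ 2 * q +
      u ^ 2 * w ^ 4 * p * q ^ 2 + u ^ 4 * v * w * p * q)) (r * w ^ 5 * p * q ^ 2)) using 1
    simp only [d]; ring
  rwa [h.rotate.mul_mem_span_triple_iff v_mem_closure
      (mul_mem q_mem_closure (pow_mem w_mem_closure 2)) (pow_mem u_mem_closure 7),
    ← span_triple_rotate,
    h.mul_mem_span_triple_iff (pow_mem u_mem_closure 2) v_mem_closure q_mem_closure,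
    span_triple_rotate] at hrL

theorem mem_span_w_of_mul_d_mem (h : M.IsRegular) (hr : r * M.d ∈ M.minorsIdeal ^ 3) :
    r ∈ Ideal.span {M.u ^ 2, M.v ^ 2, M.w} := by
  obtain ⟨u, v, w, p, q⟩ := M
  let L := Ideal.span {v ^ 7 * p ^ 3 * v ^ 2, w, u ^ 2}
  have mem_L (f g k : R) : f * (v ^ 7 * p ^ 3 * v ^ 2) + g * w + k * u ^ 2 ∈ L :=
    Submodule.mem_span_triple.2 ⟨f, g, k, rfl⟩
  have cube_le : minorsIdeal ⟨u, v, w, p, q⟩ ^ 3 ≤ L := by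
    rw [minorsIdeal, ← span_triple_rotate]
    refine span_triple_pow_le_of_mem ?_ ?_ ?_
    · convert mem_L 1 (-3 * u * v ^ 6 * w * p ^ 2 * q + 3 * u ^ 2 * v ^ 3 * w ^ 3 * p * q ^ 2
        - u ^ 3 * w ^ 5 * q ^ 3) 0 using 1
      simp only [c]; ring
    · convert mem_L 0 (w ^ 2 * q) (-v) using 1
      simp only [a]; ring
    · convert mem_L 0 (-v ^ 2 * p) u using 1
      simp only [b]; ring
  have hrL : v ^ 7 * p ^ 3 * r ∈ L := by
    convert sub_mem (cube_le hr) (mem_L 0 (r * (u * v ^ 4 * w * p ^ 2 * q +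
      u ^ 2 * v * w ^ 3 * p * q ^ 2 + w ^ 6 * p * q ^ 3 + u ^ 4 * v ^ 2 * p * q))
      (r * u ^ 5 * q)) using 1
    simp only [d]; ring
  rwa [h.rotate.rotate.mul_mem_span_triple_iff w_mem_closure (pow_mem u_mem_closure 2)
      (mul_mem (pow_mem v_mem_closure 7) (pow_mem p_mem_closure 3)), ← span_triple_rotate] at hrL

theorem mul_d_mem_minorsIdeal_cube_iff [CharP R 2] (h : M.IsRegular) :
    r * M.d ∈ M.minorsIdeal ^ 3 ↔ r ∈ squaresAndProd M.u M.v M.w :=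
  ⟨fun hr => PermutablyRegular.mem_squaresAndProd_of_mem_span h u_mem_closure v_mem_closure
    w_mem_closure (h.mem_span_u_of_mul_d_mem (Ideal.mem_sup_left hr)) (h.mem_span_v_of_mul_d_mem hr)
    (h.mem_span_w_of_mul_d_mem hr), M.mul_d_mem_minorsIdeal_cube⟩

section Staircase

variable {s : Set R} {g' t f : R} {i j k : ℕ}

theorem liftsModulo_insert [CharP R 2] (h : M.IsRegular) {α κ : ℕ}
    (hijk : i + j + k = 3)
    (hs : LiftsModulo M.u (M.v ^ (2 * j + 3 * k + α) * M.p ^ (j + k + κ)) M.extendedCube s)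
    (hg' : g' ∈ s) (hf : f ∈ M.extendedCube)
    (hrel : M.v ^ α * M.p ^ κ * (M.a ^ i * M.b ^ j * M.c ^ k) = t * g' + M.u * f) :
    LiftsModulo M.u (M.v ^ (2 * j + 3 * k) * M.p ^ (j + k)) M.extendedCube
      (insert (M.a ^ i * M.b ^ j * M.c ^ k) s) := by
  have mem_closure (α κ : ℕ) : M.v ^ α * M.p ^ κ ∈ Submonoid.closure {M.v, M.p} :=
    mul_mem (pow_mem v_mem_closure α) (pow_mem p_mem_closure κ)
  have mem_closure' : M.w ^ (3 * i + j) * M.q ^ i ∈ Submonoid.closure {M.w, M.q} :=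
    mul_mem (pow_mem w_mem_closure _) (pow_mem q_mem_closure _)
  refine LiftsModulo.insert ?_
    (PermutablyRegular.isSMulRegular_quotient_span_singleton h u_mem_closure (mem_closure _ _))
    (PermutablyRegular.isSMulRegular_quotient_span_pair h u_mem_closure (mem_closure α κ)
      mem_closure')
    (M.minorsIdeal_cube_le (M.monomial_mem hijk)) (monomial_smodEq i j k) hg' hf hrel
  convert hs using 1
  ring

theorem liftsModulo_insert_row [CharP R 2] (h : M.IsRegular) (hijk : i + j + k = 2)
    (hs : LiftsModulo M.u (M.v ^ (2 * j + 3 * (k + 1)) * M.p ^ (j + (k + 1))) M.extendedCube s)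
    (hmem : M.a ^ i * M.b ^ j * M.c ^ (k + 1) ∈ s) :
    LiftsModulo M.u (M.v ^ (2 * (j + 1) + 3 * k) * M.p ^ (j + 1 + k)) M.extendedCube
      (insert (M.a ^ i * M.b ^ (j + 1) * M.c ^ k) s) := by
  refine h.liftsModulo_insert (α := 1) (κ := 0) (t := -M.w) (by omega) ?_ hmem
    (Ideal.mul_mem_left _ (-1) (M.minorsIdeal_cube_le (M.monomial_mem (i := i + 1) (j := j)
      (k := k) (by omega)))) ?_
  · convert hs using 3 <;> ring
  · linear_combination M.a ^ i * M.b ^ j * M.c ^ k * M.firstRow_relation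

/- The monomials of degree three are adjoined in the order of decreasing powers of `v` modulo `u`,
each of them linked to a previous one by a relation with remainder in `u · extendedCube`. -/
theorem minorsIdeal_cube_inf_span_le [CharP R 2] (h : M.IsRegular) :
    M.minorsIdeal ^ 3 ⊓ Ideal.span {M.u} ≤ Ideal.span {M.u} * M.extendedCube := by
  have h₀₀₃ : LiftsModulo M.u (M.v ^ 9 * M.p ^ 3) M.extendedCube {M.a ^ 0 * M.b ^ 0 * M.c ^ 3} :=
    .singleton (PermutablyRegular.isSMulRegular_quotient_span_singleton h u_mem_closure
      (mul_mem (pow_mem v_mem_closure _) (pow_mem p_mem_closure _)))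
      (M.minorsIdeal_cube_le (M.monomial_mem rfl)) (by simpa using monomial_smodEq (M := M) 0 0 3)
  have h₀₁₂ := h.liftsModulo_insert_row (i := 0) (j := 0) (k := 2) rfl h₀₀₃ (by simp)
  have h₀₂₁ := h.liftsModulo_insert_row (i := 0) (j := 1) (k := 1) rfl h₀₁₂ (by simp)
  have h₀₃₀ := h.liftsModulo_insert_row (i := 0) (j := 2) (k := 0) rfl h₀₂₁ (by simp)
  have h₁₀₂ := h.liftsModulo_insert (i := 1) (j := 0) (k := 2) (α := 0) (κ := 1) rfl h₀₃₀
    (t := M.q) (g' := M.a ^ 0 * M.b ^ 3 * M.c ^ 0) (by simp)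
    (M.extendedCube.mul_mem_left M.u M.d_mem) (by have := M.sq_u_mul_d; grind)
  have h₁₁₁ := h.liftsModulo_insert_row (i := 1) (j := 0) (k := 1) rfl h₁₀₂ (by simp)
  have h₁₂₀ := h.liftsModulo_insert_row (i := 1) (j := 1) (k := 0) rfl h₁₁₁ (by simp)
  have h₂₀₁ := h.liftsModulo_insert (i := 2) (j := 0) (k := 1) (α := 1) (κ := 1) rfl h₁₂₀
    (t := M.w * M.q) (g' := M.a ^ 1 * M.b ^ 2 * M.c ^ 0) (by simp) M.a_mul_e_mem
    (by have := M.u_mul_e; grind)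
  have h₂₁₀ := h.liftsModulo_insert_row (i := 2) (j := 0) (k := 0) rfl h₂₀₁ (by simp)
  have h₃₀₀ := h.liftsModulo_insert (i := 3) (j := 0) (k := 0) (α := 2) (κ := 1) rfl h₂₁₀
    (t := -M.w ^ 2 * M.q) (g' := M.a ^ 2 * M.b ^ 1 * M.c ^ 0) (by simp)
    (M.extendedCube.mul_mem_left (-M.u)
      (M.minorsIdeal_cube_le (M.monomial_mem (i := 2) (j := 0) (k := 1) rfl)))
    (by linear_combination M.a ^ 2 * M.secondRow_relation)
  refine (inf_le_inf_right _ (span_triple_pow_le fun i j k hijk => Ideal.subset_span ?_)).trans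
    h₃₀₀.span_inf_le
  obtain ⟨hi, hj, rfl⟩ : i ≤ 3 ∧ j ≤ 3 - i ∧ k = 3 - i - j := by omega
  interval_cases i <;> interval_cases j <;> simp

end Staircase

theorem isSMulRegular_quotient_extendedCube [CharP R 2] (h : M.IsRegular) :
    IsSMulRegular (R ⧸ M.extendedCube) M.u := by
  refine (isSMulRegular_quotient_iff_mem_of_smul_mem _ _).2 fun r hr => ?_
  rw [smul_eq_mul, extendedCube, sup_comm, Ideal.mem_span_singleton_sup] at hr
  obtain ⟨s, i, hi, hr⟩ := hr
  have hs : s ∈ Ideal.span {M.u, M.v ^ 2, M.w ^ 2} := by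
    refine h.mem_span_u_of_mul_d_mem ?_
    rw [sup_comm, Ideal.mem_span_singleton_sup]
    exact ⟨r, -i, neg_mem hi, by linear_combination -hr⟩
  obtain ⟨f, g, k, rfl⟩ := Submodule.mem_span_triple.1 hs
  simp only [smul_eq_mul] at hr
  have hi' : (g * M.v ^ 2 + k * M.w ^ 2) * M.d + i ∈ M.minorsIdeal ^ 3 ⊓ Ideal.span {M.u} := by
    refine ⟨add_mem (M.mul_d_mem_minorsIdeal_cube ?_) hi, ?_⟩
    · exact mem_squaresAndProd_iff_exists.2 ⟨0, g, k, 0, by ring⟩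
    · exact Ideal.mem_span_singleton.2 ⟨r - f * M.d, by linear_combination hr⟩
  obtain ⟨j, hj, hij⟩ := Ideal.mem_span_singleton_mul.1 (h.minorsIdeal_cube_inf_span_le hi')
  have hrj : r = f * M.d + j :=
    PermutablyRegular.isSMulRegular h u_mem_closure (by
      simp only [smul_eq_mul]; linear_combination -hr - hij)
  rw [hrj]
  exact add_mem (Ideal.mul_mem_left _ _ M.d_mem) hj

theorem colon_rowIdeal_cube [CharP R 2] (h : M.IsRegular) :
    Submodule.colon (M.minorsIdeal ^ 3) (M.rowIdeal ^ 3 : Ideal R) = M.extendedCube := by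
  refine le_antisymm (fun r hr => ?_) fun r hr => Submodule.mem_colon.2 fun s hs => ?_
  · have hu : M.u ^ 3 ∈ M.rowIdeal ^ 3 := Ideal.pow_mem_pow M.u_mem_rowIdeal 3
    have hru : M.u ^ 3 * r ∈ M.extendedCube := by
      rw [mul_comm]
      exact M.minorsIdeal_cube_le (Submodule.mem_colon.1 hr _ hu)
    exact (mul_mem_iff_of_isSMulRegular_quotient
      (h.isSMulRegular_quotient_extendedCube.pow 3)).1 hru
  · rw [smul_eq_mul, mul_comm]
    exact M.rowIdeal_cube_mul_extendedCube_le (Ideal.mul_mem_mul hs hr)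

theorem mul_d_mem_colon_rowIdeal_sq_iff [CharP R 2] (h : M.IsRegular) :
    r * M.d ∈ Submodule.colon (M.minorsIdeal ^ 3) (M.rowIdeal ^ 2 : Ideal R) ↔
      r ∈ M.rowIdeal := by
  constructor
  · intro hr
    have huv : M.u * M.v ∈ M.rowIdeal ^ 2 := by
      rw [pow_two]
      exact Ideal.mul_mem_mul M.u_mem_rowIdeal M.v_mem_rowIdeal
    rw [rowIdeal, ← PermutablyRegular.mul_mem_squaresAndProd_iff h u_mem_closure v_mem_closure
      w_mem_closure, ← h.mul_d_mem_minorsIdeal_cube_iff, mul_right_comm]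
    exact Submodule.mem_colon.1 hr _ huv
  · refine fun hr => Submodule.mem_colon.2 fun s hs => ?_
    rw [smul_eq_mul, mul_right_comm, h.mul_d_mem_minorsIdeal_cube_iff]
    refine span_triple_cube_le_squaresAndProd _ _ _ ?_
    rw [pow_succ']
    exact Ideal.mul_mem_mul hr hs

theorem nonempty_extendedCube_quotient_equiv [CharP R 2] (h : M.IsRegular) :
    Nonempty ((↥M.extendedCube ⧸ Submodule.comap M.extendedCube.subtype
      (Submodule.colon (M.minorsIdeal ^ 3) (M.rowIdeal ^ 2 : Ideal R))) ≃ₗ[R]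
      (R ⧸ M.rowIdeal)) :=
  nonempty_sup_span_quotient_equiv (fun _ hr => Submodule.mem_colon.2 fun _ _ =>
    Ideal.mul_mem_right _ _ hr) fun _ => h.mul_d_mem_colon_rowIdeal_sq_iff

theorem length_extendedCube_quotient [CharP R 2] (h : M.IsRegular) :
    Module.length R (↥M.extendedCube ⧸
      Submodule.comap M.extendedCube.subtype (M.minorsIdeal ^ 3)) =
      7 * Module.length R (R ⧸ M.rowIdeal) := by
  obtain ⟨φ⟩ := nonempty_sup_span_quotient_equiv le_rfl
    fun r => h.mul_d_mem_minorsIdeal_cube_iff (r := r)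
  exact φ.length_eq.trans
    (PermutablyRegular.length_quotient_squaresAndProd h u_mem_closure v_mem_closure w_mem_closure)

theorem symbolicPower_minorsIdeal_three [CharP R 2] [IsNoetherianRing R] [IsLocalRing R]
    (h : M.IsRegular) (hQ : M.rowIdeal.radical = maximalIdeal R)
    (hI : (Ideal.span {M.u, M.v ^ 3 * M.p, M.w ^ 3 * M.q}).radical = maximalIdeal R) :
    symbolicPower M.minorsIdeal 3 = M.extendedCube := by
  have rowIdeal_ne_top : M.rowIdeal ≠ ⊤ := by
    rw [ne_eq, ← Ideal.radical_eq_top, hQ]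
    exact Ideal.IsPrime.ne_top'
  refine symbolicPower_eq_of_isSMulRegular (x := M.u) (T := M.rowIdeal ^ 3) ?_
    M.minorsIdeal_cube_le (ne_top_of_le_ne_top rowIdeal_ne_top M.extendedCube_le_rowIdeal)
    h.isSMulRegular_quotient_extendedCube ?_ M.rowIdeal_cube_mul_extendedCube_le
  · rw [← hQ]
    refine le_antisymm (Ideal.radical_mono (sup_le M.minorsIdeal_le_rowIdeal ?_)) ?_
    · exact (Ideal.span_singleton_le_iff_mem _).2 M.u_mem_rowIdeal
    · rw [hQ, ← hI]
      exact Ideal.radical_mono M.span_le_minorsIdeal_sup_span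
  · rw [Ideal.radical_pow _ three_ne_zero, hQ]

end IsRegular

/-- The matrix `((x, y^β, z^γ), (y^(2β + P), z^(2γ + S), x²))`. -/
def ofPowers (x y z : R) (β γ P S : ℕ) : HerzogMatrix R := ⟨x, y ^ β, z ^ γ, y ^ P, z ^ S⟩

section OfPowers

variable {x y z : R} {β γ : ℕ} (P S : ℕ)

theorem isRegular_ofPowers
    (h : PermutablyRegular (Submonoid.powers x) (Submonoid.powers y) (Submonoid.powers z)) :
    (ofPowers x y z β γ P S).IsRegular := by
  refine h.mono (Submonoid.closure_le.2 ?_) (Submonoid.closure_le.2 ?_)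
    (Submonoid.closure_le.2 ?_)
  · simp [ofPowers, Submonoid.mem_powers]
  · rintro _ (rfl | rfl)
    exacts [⟨β, rfl⟩, ⟨P, rfl⟩]
  · rintro _ (rfl | rfl)
    exacts [⟨γ, rfl⟩, ⟨S, rfl⟩]

theorem radical_rowIdeal_ofPowers (hβ : β ≠ 0) (hγ : γ ≠ 0) :
    (ofPowers x y z β γ P S).rowIdeal.radical = (Ideal.span {x, y, z}).radical := by
  rw [← radical_span_triple_pow x y z one_ne_zero hβ hγ, pow_one]
  rfl

theorem radical_span_ofPowers (hβ : β ≠ 0) (hγ : γ ≠ 0) :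
    (Ideal.span {x, (y ^ β) ^ 3 * y ^ P, (z ^ γ) ^ 3 * z ^ S}).radical =
      (Ideal.span {x, y, z}).radical := by
  rw [← radical_span_triple_pow x y z one_ne_zero (j := 3 * β + P) (k := 3 * γ + S) (by omega)
    (by omega)]
  ring_nf

end OfPowers

end HerzogMatrix

/-- Assume `α = 1`, `α' = 2`, `2β ≤ β'`, `2γ ≤ γ'`, `Q = (x, y^β, z^γ)` and
`char R = 2`.  Then `(I³ :_R Q³)/(I³ :_R Q²) ≅ R/Q`,
`depth R/(I³ :_R Q³) > 0`, hence `I⁽³⁾ = I³ :_R Q³`, and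
`length(I⁽³⁾/I³) = 7 · length(R/Q)`. -/
theorem third_symbolic_power_char_two
    {R : Type*} [CommRing R] [IsNoetherianRing R] [IsLocalRing R]
    (hdim : ringKrullDim R = 3)
    (hCM : ∀ u v w : R, (Ideal.span {u, v, w}).radical = maximalIdeal R →
      RingTheory.Sequence.IsRegular R [u, v, w])
    (x y z : R) (hsop : (Ideal.span {x, y, z}).radical = maximalIdeal R)
    (β γ β' γ' : ℕ)
    (hβ : 0 < β) (hγ : 0 < γ)
    (hββ' : 2 * β ≤ β') (hγγ' : 2 * γ ≤ γ')
    (a b c : R)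
    (ha : a = z ^ (γ + γ') - x ^ 2 * y ^ β)
    (hb : b = x ^ 3 - y ^ β' * z ^ γ)
    (hc : c = y ^ (β + β') - x * z ^ γ')
    (I : Ideal R) (hI : I = Ideal.span {a, b, c})
    (Q : Ideal R) (hQ : Q = Ideal.span {x, y ^ β, z ^ γ})
    (hchar : CharP R 2)
    (J₂ J₃ : Ideal R)
    (hJ₂ : J₂ = Submodule.colon ((I ^ 3 : Ideal R) : Submodule R R)
      ((Q ^ 2 : Ideal R) : Submodule R R))
    (hJ₃ : J₃ = Submodule.colon ((I ^ 3 : Ideal R) : Submodule R R)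
      ((Q ^ 3 : Ideal R) : Submodule R R)) :
    Nonempty
      ((↥J₃ ⧸ Submodule.comap J₃.subtype (J₂ : Submodule R R)) ≃ₗ[R] (R ⧸ Q)) ∧
      (∃ r ∈ maximalIdeal R, IsSMulRegular (R ⧸ J₃) r) ∧
      symbolicPower I 3 = J₃ ∧
      ∃ m : ℕ, HasLength R (R ⧸ Q) m ∧
        HasLength R (↥J₃ ⧸ Submodule.comap J₃.subtype ((I ^ 3 : Ideal R) : Submodule R R))
          (7 * m) := by
  obtain ⟨P, rfl⟩ := Nat.exists_eq_add_of_le hββ'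
  obtain ⟨S, rfl⟩ := Nat.exists_eq_add_of_le hγγ'
  let M := HerzogMatrix.ofPowers x y z β γ P S
  have hIM : I = M.minorsIdeal := by
    rw [hI, ha, hb, hc]
    simp only [HerzogMatrix.minorsIdeal, HerzogMatrix.a, HerzogMatrix.b, HerzogMatrix.c, M,
      HerzogMatrix.ofPowers]
    ring_nf
  have hQM : Q = M.rowIdeal := hQ
  have hM : M.IsRegular :=
    HerzogMatrix.isRegular_ofPowers P S (permutablyRegular_powers_of_radical_eq hCM hsop)
  have hQ_radical : M.rowIdeal.radical = maximalIdeal R :=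
    (HerzogMatrix.radical_rowIdeal_ofPowers P S hβ.ne' hγ.ne').trans hsop
  have hJ : J₃ = M.extendedCube := by rw [hJ₃, hIM, hQM, hM.colon_rowIdeal_cube]
  obtain ⟨m, hm⟩ := ENat.ne_top_iff_exists.1 (length_quotient_ne_top_of_radical_eq hQ_radical)
  have hm' := hM.length_extendedCube_quotient
  rw [← hm] at hm'
  rw [hJ, hJ₂, hIM, hQM]
  refine ⟨hM.nonempty_extendedCube_quotient_equiv, ⟨x, ?_, hM.isSMulRegular_quotient_extendedCube⟩,
    hM.symbolicPower_minorsIdeal_three hQ_radical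
      ((HerzogMatrix.radical_span_ofPowers P S hβ.ne' hγ.ne').trans hsop),
    m, .of_length_eq hm.symm, .of_length_eq (mod_cast hm')⟩
  exact hQ_radical.le (Ideal.le_radical M.u_mem_rowIdeal)
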